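/- Let (k : K → B, f : B → M, s : M → B, q : B → K) be a Schreier point with K commutative, and let Eq(f) = {(x, y) ∈ B × B : f(x) = f(y)}, a submonoid of B × B. Then the map μ : Eq(f) → B defined by μ(x, y) = k(q(x)) + y is a monoid homomorphism; moreover, for all x, y, z ∈ B with f(x) = f(y) = f(z): μ(x, μ(y, z)) = μ(μ(x, y), z) (associativity), μ(x, y) = μ(y, x) (commutativity), and μ(s(f(y)), y) = y (unit law). -/

import Mathlib

/-!
In the coordinates `b = k (q b) + s (f b)` the monoid `B` is the semidirect product of `K` by `M`,
where `m` acts on `K` by the rule `s m + k a = k (m • a) + s m`, and on a fibre of `f` the map `μ`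
is the addition of `K`: it sends `(k a + s m, k b + s m)` to `k (a + b) + s m`. This gives the
associativity, commutativity and unit laws. When `K` is commutative the rule for `s m` holds for
every `y` over `m`, that is `y + k a = k (m • a) + y`; since `q (x + x') = q x + f x • q x'`,
taking `a = q x'` turns this into additivity of `μ`.
-/

/-- A monoid extension: `K`, `X` additive monoids (not assumed commutative),
`M` a multiplicative monoid, `k : K → X` an injective monoid homomorphism whose image
is `{x | f x = 1}`, and `f : X → M` a surjective monoid homomorphism. -/
structure MonoidExtension {K X M : Type*} [AddMonoid K] [AddMonoid X] [Monoid M]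
    (k : K → X) (f : X → M) : Prop where
  k_add : ∀ a b : K, k (a + b) = k a + k b
  k_zero : k 0 = 0
  k_inj : Function.Injective k
  ker_eq : ∀ x : X, f x = 1 ↔ x ∈ Set.range k
  f_add : ∀ x y : X, f (x + y) = f x * f y
  f_zero : f 0 = 1
  f_surj : Function.Surjective f

/-- The set `B_m` of representatives of `m`. -/
def Reps {K X M : Type*} [AddMonoid K] [AddMonoid X] [Monoid M]
    (k : K → X) (f : X → M) (m : M) : Set X :=
  {u | f u = m ∧ ∀ x : X, f x = m → ∃! a : K, x = k a + u}

/-- A monoid extension is a Schreier extension if every `m` has a representative. -/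
def IsSchreier {K X M : Type*} [AddMonoid K] [AddMonoid X] [Monoid M]
    (k : K → X) (f : X → M) : Prop :=
  ∀ m : M, (Reps k f m).Nonempty

/-- A Schreier point over `M`: a monoid extension `k`, `f` with a homomorphic section `s` of `f`
and the Schreier retraction `q`. The structure is a predicate on plain functions because `B` is
additive and `M` multiplicative, so that `f` and `s` are not bundled homomorphisms. -/
structure IsSchreierPoint {K B M : Type*} [AddMonoid K] [AddMonoid B] [Monoid M]
    (k : K → B) (f : B → M) (s : M → B) (q : B → K) : Prop extends MonoidExtension k f where
  section_mul : ∀ m n : M, s (m * n) = s m + s n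
  section_one : s 1 = 0
  map_section : ∀ m : M, f (s m) = m
  eq_add_section : ∀ b : B, b = k (q b) + s (f b)
  eq_retraction : ∀ (b : B) (a : K), b = k a + s (f b) → a = q b

/-- The action `m • a` of `M` on `K` determined by a Schreier point. -/
def schreierAction {K B M : Type*} [Add B] (k : K → B) (s : M → B) (q : B → K)
    (m : M) (a : K) : K :=
  q (s m + k a)

/-- The multiplication `μ` on the kernel pair of a Schreier point, extended by the same formula to
all pairs of elements of `B`. -/
def schreierMul {K B : Type*} [Add B] (k : K → B) (q : B → K) (x y : B) : B :=
  k (q x) + y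

namespace IsSchreierPoint

section AddMonoid

variable {K B M : Type*} [AddMonoid K] [AddMonoid B] [Monoid M]
  {k : K → B} {f : B → M} {s : M → B} {q : B → K}

theorem map_kernel (h : IsSchreierPoint k f s q) (a : K) : f (k a) = 1 :=
  (h.ker_eq (k a)).2 ⟨a, rfl⟩

theorem retraction_kernel_add_section (h : IsSchreierPoint k f s q) (a : K) (m : M) :
    q (k a + s m) = a := by
  have map_eq : f (k a + s m) = m := by rw [h.f_add, h.map_kernel, one_mul, h.map_section]
  exact (h.eq_retraction (k a + s m) a (by rw [map_eq])).symm

theorem retraction_section (h : IsSchreierPoint k f s q) (m : M) : q (s m) = 0 := by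
  simpa only [h.k_zero, zero_add] using h.retraction_kernel_add_section 0 m

theorem retraction_kernel_add (h : IsSchreierPoint k f s q) (a : K) (b : B) :
    q (k a + b) = a + q b :=
  calc q (k a + b) = q (k a + (k (q b) + s (f b))) := by rw [← h.eq_add_section b]
    _ = q (k (a + q b) + s (f b)) := by rw [h.k_add, add_assoc]
    _ = a + q b := h.retraction_kernel_add_section _ _

theorem section_add_kernel (h : IsSchreierPoint k f s q) (m : M) (a : K) :
    s m + k a = k (schreierAction k s q m a) + s m := by
  have map_eq : f (s m + k a) = m := by rw [h.f_add, h.map_kernel, mul_one, h.map_section]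
  simpa only [map_eq, schreierAction] using h.eq_add_section (s m + k a)

theorem retraction_section_add (h : IsSchreierPoint k f s q) (m : M) (b : B) :
    q (s m + b) = schreierAction k s q m (q b) :=
  calc q (s m + b) = q (s m + (k (q b) + s (f b))) := by rw [← h.eq_add_section b]
    _ = q (k (schreierAction k s q m (q b)) + s (m * f b)) := by
      rw [← add_assoc, h.section_add_kernel, add_assoc, ← h.section_mul]
    _ = schreierAction k s q m (q b) := h.retraction_kernel_add_section _ _

theorem retraction_add (h : IsSchreierPoint k f s q) (x y : B) :
    q (x + y) = q x + schreierAction k s q (f x) (q y) :=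
  calc q (x + y) = q (k (q x) + (s (f x) + y)) := by rw [← add_assoc, ← h.eq_add_section x]
    _ = q x + schreierAction k s q (f x) (q y) := by
      rw [h.retraction_kernel_add, h.retraction_section_add]

theorem schreierMul_section (h : IsSchreierPoint k f s q) (m : M) (y : B) :
    schreierMul k q (s m) y = y := by
  rw [schreierMul, h.retraction_section, h.k_zero, zero_add]

theorem schreierMul_zero (h : IsSchreierPoint k f s q) (y : B) : schreierMul k q 0 y = y := by
  simpa only [h.section_one] using h.schreierMul_section 1 y

theorem schreierMul_assoc (h : IsSchreierPoint k f s q) (x y z : B) :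
    schreierMul k q x (schreierMul k q y z) = schreierMul k q (schreierMul k q x y) z := by
  simp only [schreierMul, h.retraction_kernel_add, h.k_add, add_assoc]

end AddMonoid

section AddCommMonoid

variable {K B M : Type*} [AddCommMonoid K] [AddMonoid B] [Monoid M]
  {k : K → B} {f : B → M} {s : M → B} {q : B → K}

theorem kernel_add_left_comm (h : IsSchreierPoint k f s q) (a b : K) (x : B) :
    k a + (k b + x) = k b + (k a + x) := by
  rw [← add_assoc, ← h.k_add, add_comm a b, h.k_add, add_assoc]

theorem add_kernel (h : IsSchreierPoint k f s q) (y : B) (a : K) :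
    y + k a = k (schreierAction k s q (f y) a) + y :=
  calc y + k a = k (q y) + (s (f y) + k a) := by rw [← add_assoc, ← h.eq_add_section y]
    _ = k (q y) + (k (schreierAction k s q (f y) a) + s (f y)) := by rw [h.section_add_kernel]
    _ = k (schreierAction k s q (f y) a) + (k (q y) + s (f y)) := h.kernel_add_left_comm _ _ _
    _ = k (schreierAction k s q (f y) a) + y := by rw [← h.eq_add_section y]

theorem schreierMul_comm (h : IsSchreierPoint k f s q) {x y : B} (hxy : f x = f y) :
    schreierMul k q x y = schreierMul k q y x :=
  calc k (q x) + y = k (q x) + (k (q y) + s (f y)) := by rw [← h.eq_add_section y]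
    _ = k (q y) + (k (q x) + s (f x)) := by rw [h.kernel_add_left_comm, hxy]
    _ = k (q y) + x := by rw [← h.eq_add_section x]

theorem schreierMul_add_add (h : IsSchreierPoint k f s q) {x y : B} (hxy : f x = f y)
    (x' y' : B) :
    schreierMul k q (x + x') (y + y') = schreierMul k q x y + schreierMul k q x' y' :=
  calc k (q (x + x')) + (y + y')
      = k (q x) + ((k (schreierAction k s q (f y) (q x')) + y) + y') := by
        rw [h.retraction_add, h.k_add, hxy]
        simp only [add_assoc]
    _ = k (q x) + ((y + k (q x')) + y') := by rw [← h.add_kernel]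
    _ = (k (q x) + y) + (k (q x') + y') := by simp only [add_assoc]

end AddCommMonoid

end IsSchreierPoint

/-- Theorem 6.2 (thm:internal_monoids), key computation: given a Schreier point
`(k : K → B, f : B → M, s, q)` with `K` commutative, the map
`μ : Eq(f) → B`, `μ (x, y) = k (q x) + y`, is a monoid homomorphism on the kernel pair
`Eq(f) = {(x, y) | f x = f y}`, and it is associative, commutative and has the section
`s` as unit: `μ (s (f y), y) = y`. -/
theorem schreier_point_multiplication {K B M : Type*} [AddCommMonoid K] [AddMonoid B]
    [Monoid M]
    (k : K → B) (f : B → M) (s : M → B) (q : B → K)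
    (hE : MonoidExtension k f)
    (hs_mul : ∀ m n : M, s (m * n) = s m + s n) (hs_one : s 1 = 0)
    (hfs : ∀ m : M, f (s m) = m)
    (hq : ∀ b : B, b = k (q b) + s (f b))
    (hq_unique : ∀ (b : B) (a : K), b = k a + s (f b) → a = q b) :
    -- `μ` is a monoid homomorphism on `Eq(f)`
    (k (q (0 : B)) + (0 : B) = 0) ∧
    (∀ x y x' y' : B, f x = f y → f x' = f y' →
      k (q (x + x')) + (y + y') = (k (q x) + y) + (k (q x') + y')) ∧
    -- associativity: `μ (x, μ (y, z)) = μ (μ (x, y), z)`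
    (∀ x y z : B, f x = f y → f y = f z →
      k (q x) + (k (q y) + z) = k (q (k (q x) + y)) + z) ∧
    -- commutativity: `μ (x, y) = μ (y, x)`
    (∀ x y : B, f x = f y → k (q x) + y = k (q y) + x) ∧
    -- unit law: `μ (s (f y), y) = y`
    (∀ y : B, k (q (s (f y))) + y = y) := by
  have h : IsSchreierPoint k f s q := ⟨hE, hs_mul, hs_one, hfs, hq, hq_unique⟩
  exact ⟨h.schreierMul_zero 0,
    fun _ _ x' y' hxy _ => h.schreierMul_add_add hxy x' y',
    fun x y z _ _ => h.schreierMul_assoc x y z,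
    fun _ _ hxy => h.schreierMul_comm hxy,
    fun y => h.schreierMul_section (f y) y⟩
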